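/- Let a, b ∈ ℝ satisfy a + b ≥ (j+1)/(2j+1) and min{a, b} > 1/(2(2j+1)). Then there exists a constant C > 0 depending only on j, a, b such that for all nonnegative measurable f, g : Ż × ℝ → [0,∞], (Σ_{k∈ℤ} ∫_ℝ (⟨τ − k^{2j+1}⟩^{−a}(f∗g)(k,τ))² dτ)^{1/2} ≤ C·‖⟨σ⟩^b f‖_{ℓ²L²}·‖g‖_{ℓ²L²}. -/

import Mathlib

/-!
Write `m = 2j+1`. By `L²` duality (`nrm_le_of_dual`) the estimate is a bound for the trilinear form
`∬ g(x) ⟨σ(y)⟩^{-b} F(y) ⟨σ(x+y)⟩^{-a} H(x+y) dx dy` on `ℤ × ℝ` by `‖g‖ ‖F‖ ‖H‖`.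

The summation of weights that a single Cauchy–Schwarz inequality would require diverges, so `F` and
`H` are decomposed dyadically in modulation. For `F` supported in `|σ| ≤ M₁` and `H` in `|σ| ≤ M₂`,
with `max M₁ M₂ = N^m`, the unweighted form is `O((min M₁ M₂ · N)^{1/2}) ‖g‖ ‖F‖ ‖H‖`
(`tri_core`). There are two cases, according to the spatial frequency `n` of `g`.

* If `|n| ≥ N`, pair `g` against `F·H`. For fixed `(n, t)` the admissible `(k, τ)` have `τ` in an
  interval of length at most `2 min M₁ M₂`, and `k` with `|t - ((k+n)^m - k^m)| ≤ 2N^m`. As a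
  function of `k + n/2` the phase `(k+n)^m - k^m` is even, and it separates points of one half-line
  at the rate `m |n| |k - l|^{m-1}`, which leaves `O(N)` values of `k` (`count_phase`).
* If `|n| < N`, pair the less restricted of `H`, `F` against the product of `g` with the other one;
  then `O(N)` values of the frequency are admissible for trivial reasons.

With the weights, the pair of levels `(2^i, 2^l)` contributes `O(2^{-ε|i-l|})` with
`ε = min a b - 1/(2m) > 0`: the condition `a + b ≥ (m+1)/(2m)` makes the factor depending on
`min i l` bounded (`exponent_le`). Such a kernel is bounded on `ℓ²(ℕ)` (`sum_offdiag`), and the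
pieces of `F` and of `H` are orthogonal.
-/

open MeasureTheory
open scoped ENNReal

noncomputable section

/-- Japanese bracket `⟨x⟩ = (1+x²)^{1/2}`. -/
def jap (x : ℝ) : ℝ := Real.sqrt (1 + x ^ 2)

/-- Modulation `σ = τ − k^{2j+1}` for the dispersion `P(k) = k^{2j+1}`. -/
def sig (j : ℕ) (k : ℤ) (τ : ℝ) : ℝ := τ - (k : ℝ) ^ (2 * j + 1)

/-- Convolution on `Ż × ℝ` (only nonzero frequencies contribute). -/
def conv (f g : ℤ → ℝ → ℝ≥0∞) (k : ℤ) (τ : ℝ) : ℝ≥0∞ :=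
  ∑' k₁ : ℤ, if k₁ ≠ 0 ∧ k - k₁ ≠ 0 then ∫⁻ τ₁, f k₁ τ₁ * g (k - k₁) (τ - τ₁) else 0

/-- `ℓ²L²` norm: `(Σ_k ∫ f(k,τ)² dτ)^{1/2}`. -/
def l2L2 (f : ℤ → ℝ → ℝ≥0∞) : ℝ≥0∞ := (∑' k : ℤ, ∫⁻ τ, (f k τ) ^ 2) ^ (1 / 2 : ℝ)

/-- Modulation weight `⟨σ⟩^b f`. -/
def wt (j : ℕ) (b : ℝ) (f : ℤ → ℝ → ℝ≥0∞) : ℤ → ℝ → ℝ≥0∞ :=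
  fun k τ => ENNReal.ofReal (jap (sig j k τ) ^ b) * f k τ

/-! ### L² duality and the three Cauchy–Schwarz pairings -/

/-- The `L²(μ)` norm of a `[0,∞]`-valued function. -/
def nrm {α : Type*} [MeasurableSpace α] (μ : Measure α) (f : α → ℝ≥0∞) : ℝ≥0∞ :=
  (∫⁻ x, f x ^ 2 ∂μ) ^ (1 / 2 : ℝ)

lemma cauchy_schwarz {α : Type*} [MeasurableSpace α] (μ : Measure α) {f g : α → ℝ≥0∞}
    (hf : Measurable f) (hg : Measurable g) :
    ∫⁻ x, f x * g x ∂μ ≤ nrm μ f * nrm μ g := by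
  have := ENNReal.lintegral_mul_le_Lp_mul_Lq μ Real.HolderConjugate.two_two
    hf.aemeasurable hg.aemeasurable
  simpa [nrm] using this

lemma setLIntegral_cauchy_schwarz {α : Type*} [MeasurableSpace α] (μ : Measure α) {E : Set α}
    (hE : MeasurableSet E) {f g : α → ℝ≥0∞} (hf : Measurable f) (hg : Measurable g) :
    ∫⁻ x in E, f x * g x ∂μ ≤ nrm μ (E.indicator f) * nrm μ g := by
  rw [← lintegral_indicator hE]
  refine le_trans (le_of_eq ?_) (cauchy_schwarz μ (hf.indicator hE) hg)
  congr with x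
  by_cases h : x ∈ E <;> simp [h]

/-- `L²` duality. The test functions are truncations of `u`, so that no finiteness of `∫ u²` is
needed beforehand. -/
lemma nrm_le_of_dual {α : Type*} [MeasurableSpace α] (μ : Measure α) [SigmaFinite μ]
    {u : α → ℝ≥0∞} (hu : Measurable u) (C : ℝ≥0∞)
    (h : ∀ v : α → ℝ≥0∞, Measurable v → ∫⁻ x, v x * u x ∂μ ≤ C * nrm μ v) :
    nrm μ u ≤ C := by
  set S := spanningSets μ
  set v : ℕ → α → ℝ≥0∞ := fun N => (S N).indicator (fun x => min (u x) N) with hv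
  have hvm : ∀ N, Measurable (v N) := fun N =>
    (hu.min measurable_const).indicator (measurableSet_spanningSets μ N)
  have hvu : ∀ N x, v N x ≤ u x := fun N x => by
    simp only [hv, Set.indicator]
    split_ifs
    · exact min_le_left _ _
    · exact zero_le
  have hmono : ∀ x, Monotone fun N => v N x := by
    intro x N M hNM
    simp only [hv, Set.indicator]
    split_ifs with h1 h2
    · exact min_le_min le_rfl (by exact_mod_cast hNM)
    · exact absurd (monotone_spanningSets μ hNM h1) h2
    · exact zero_le
    · exact le_rfl
  have hbd : ∀ N, ∫⁻ x, v N x ^ 2 ∂μ ≤ C ^ 2 := by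
    intro N
    have hfin : ∫⁻ x, v N x ^ 2 ∂μ ≠ ∞ := by
      refine ne_top_of_le_ne_top (b := ∫⁻ x in S N, (N : ℝ≥0∞) ^ 2 ∂μ) ?_ ?_
      · rw [setLIntegral_const]
        exact ENNReal.mul_ne_top (by simp) (measure_spanningSets_lt_top μ N).ne
      · rw [← lintegral_indicator (measurableSet_spanningSets μ N)]
        refine lintegral_mono fun x => ?_
        by_cases hx : x ∈ S N
        · simp only [hv]
          rw [Set.indicator_of_mem hx, Set.indicator_of_mem hx]
          exact pow_le_pow_left' (min_le_right (u x) (N : ℝ≥0∞)) 2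
        · simp [hv, Set.indicator_of_notMem hx]
    have h1 : ∫⁻ x, v N x ^ 2 ∂μ ≤ C * nrm μ (v N) := by
      refine le_trans (lintegral_mono fun x => ?_) (h (v N) (hvm N))
      rw [sq]
      exact mul_le_mul' le_rfl (hvu N x)
    have hsq : ∫⁻ x, v N x ^ 2 ∂μ = nrm μ (v N) * nrm μ (v N) := by
      rw [nrm, ← ENNReal.rpow_add_of_nonneg _ _ (by norm_num) (by norm_num)]
      norm_num
    have hfin' : nrm μ (v N) ≠ ∞ := by
      rw [nrm]; exact ENNReal.rpow_ne_top_of_nonneg (by norm_num) hfin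
    rw [hsq] at h1
    rw [hsq]
    have h2 : nrm μ (v N) ≤ C := by
      by_cases h0 : nrm μ (v N) = 0
      · simp [h0]
      · exact (ENNReal.mul_le_mul_iff_left h0 hfin').1 h1
    rw [sq]; exact mul_le_mul' h2 h2
  have hsup : ∀ x, ⨆ N, v N x ^ 2 = u x ^ 2 := by
    intro x
    refine le_antisymm (iSup_le fun N => by gcongr; exact hvu N x) ?_
    have hx : ∃ N, x ∈ S N :=
      Set.mem_iUnion.1 ((iUnion_spanningSets μ).symm ▸ Set.mem_univ x)
    obtain ⟨N0, hN0⟩ := hx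
    have ht : Filter.Tendsto (fun N : ℕ => min (u x) (N : ℝ≥0∞) ^ 2) Filter.atTop
        (nhds (min (u x) ∞ ^ 2)) :=
      ((ENNReal.continuous_pow 2).tendsto _).comp
        (tendsto_const_nhds.min ENNReal.tendsto_nat_nhds_top)
    rw [min_top_right] at ht
    refine le_of_tendsto ht (Filter.eventually_atTop.2 ⟨N0, fun N hN => ?_⟩)
    refine le_trans ?_ (le_iSup _ N)
    have hx : x ∈ S N := monotone_spanningSets μ hN hN0
    simp only [hv, Set.indicator_of_mem hx]
    exact le_rfl
  have hfinal : ∫⁻ x, u x ^ 2 ∂μ ≤ C ^ 2 := by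
    simp_rw [← hsup]
    rw [lintegral_iSup (fun N => (hvm N).pow_const 2)
      (fun N M hNM x => by have := hmono x hNM; simp only at this ⊢; gcongr)]
    exact iSup_le hbd
  calc nrm μ u ≤ (C ^ 2) ^ (1 / 2 : ℝ) := by rw [nrm]; gcongr
    _ = C := by
      rw [← ENNReal.rpow_natCast, ← ENNReal.rpow_mul]; norm_num

lemma nrm_prod_mul {G : Type*} [MeasurableSpace G] (μ : Measure G) [SFinite μ] {f g : G → ℝ≥0∞} (hf : Measurable f) (hg : Measurable g) :
    nrm (μ.prod μ) (fun p => f p.1 * g p.2) = nrm μ f * nrm μ g := by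
  rw [nrm, nrm, nrm, ← ENNReal.mul_rpow_of_nonneg _ _ (by norm_num)]
  congr 1
  rw [← lintegral_prod_mul (hf.pow_const 2).aemeasurable (hg.pow_const 2).aemeasurable]
  simp_rw [mul_pow]

lemma nrm_indicator_fst_le {G : Type*} [MeasurableSpace G] (μ : Measure G) [SFinite μ] {E : Set (G × G)} (hE : MeasurableSet E) {K : ℝ≥0∞}
    (hK : ∀ x, μ (Prod.mk x ⁻¹' E) ≤ K) {f : G → ℝ≥0∞} (hf : Measurable f) :
    nrm (μ.prod μ) (E.indicator fun p => f p.1) ≤ K ^ (1 / 2 : ℝ) * nrm μ f := by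
  rw [nrm, nrm, ← ENNReal.mul_rpow_of_nonneg _ _ (by norm_num)]
  gcongr
  have hm : Measurable fun p : G × G => E.indicator (fun p => f p.1) p ^ 2 :=
    ((hf.comp measurable_fst).indicator hE).pow_const 2
  rw [lintegral_prod _ hm.aemeasurable,
    ← lintegral_const_mul _ (hf.pow_const 2)]
  refine lintegral_mono fun x => ?_
  calc ∫⁻ y, (E.indicator (fun p => f p.1) (x, y)) ^ 2 ∂μ
      = ∫⁻ y, (Prod.mk x ⁻¹' E).indicator (fun _ => f x ^ 2) y ∂μ := by
        congr with y
        by_cases h : (x, y) ∈ E <;> simp [h]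
    _ = f x ^ 2 * μ (Prod.mk x ⁻¹' E) := by
        rw [lintegral_indicator (measurable_prodMk_left hE), setLIntegral_const]
    _ ≤ K * f x ^ 2 := by rw [mul_comm]; gcongr; exact hK x

section Group

variable {G : Type*} [AddCommGroup G] [MeasurableSpace G] [MeasurableAdd₂ G]
  (μ : Measure G) [SFinite μ] [μ.IsAddLeftInvariant]

lemma nrm_prod_snd_add {f g : G → ℝ≥0∞} (hf : Measurable f) (hg : Measurable g) :
    nrm (μ.prod μ) (fun p => f p.2 * g (p.1 + p.2)) = nrm μ f * nrm μ g := by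
  have h := (measurePreserving_prod_add_swap μ μ).lintegral_comp
    (f := fun p : G × G => (f p.1 * g p.2) ^ 2) (by fun_prop)
  rw [← nrm_prod_mul μ hf hg, nrm, nrm, ← h]
  simp [add_comm]

/-- Cauchy–Schwarz for the trilinear form, pairing `g` against `F·H`. -/
lemma tri_fst {E : Set (G × G)} (hE : MeasurableSet E) {K : ℝ≥0∞}
    (hK : ∀ x, μ {y | (x, y) ∈ E} ≤ K) {g F H : G → ℝ≥0∞} (hg : Measurable g)
    (hF : Measurable F) (hH : Measurable H) :
    ∫⁻ p in E, g p.1 * (F p.2 * H (p.1 + p.2)) ∂(μ.prod μ)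
      ≤ K ^ (1 / 2 : ℝ) * (nrm μ g * nrm μ F * nrm μ H) := by
  refine (setLIntegral_cauchy_schwarz (μ.prod μ) hE (hg.comp measurable_fst)
    (g := fun p => F p.2 * H (p.1 + p.2)) (by fun_prop)).trans ?_
  rw [nrm_prod_snd_add μ hF hH]
  calc _ ≤ (K ^ (1 / 2 : ℝ) * nrm μ g) * (nrm μ F * nrm μ H) := by
        gcongr; exact nrm_indicator_fst_le μ hE hK hg
    _ = _ := by ring

/-- Cauchy–Schwarz for the trilinear form, pairing `F` against `g·H`. -/
lemma tri_snd {E : Set (G × G)} (hE : MeasurableSet E) {K : ℝ≥0∞}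
    (hK : ∀ y, μ {x | (x, y) ∈ E} ≤ K) {g F H : G → ℝ≥0∞} (hg : Measurable g)
    (hF : Measurable F) (hH : Measurable H) :
    ∫⁻ p in E, g p.1 * (F p.2 * H (p.1 + p.2)) ∂(μ.prod μ)
      ≤ K ^ (1 / 2 : ℝ) * (nrm μ g * nrm μ F * nrm μ H) := by
  have hE' : MeasurableSet (Prod.swap ⁻¹' E) := measurable_swap hE
  have h := tri_fst μ hE' (K := K) hK hF hg hH
  have e := (Measure.measurePreserving_swap (μ := μ) (ν := μ)).setLIntegral_comp_preimage hE
    (f := fun p : G × G => g p.1 * (F p.2 * H (p.1 + p.2))) (by fun_prop)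
  rw [← e]
  calc _ = ∫⁻ p in Prod.swap ⁻¹' E, F p.1 * (g p.2 * H (p.1 + p.2)) ∂(μ.prod μ) := by
        congr with p
        simp only [Prod.fst_swap, Prod.snd_swap, add_comm p.2 p.1]
        ring
    _ ≤ _ := h
    _ = _ := by ring

/-- Cauchy–Schwarz for the trilinear form, pairing `H` against `g·F`. -/
lemma tri_add [MeasurableNeg G] {E : Set (G × G)} (hE : MeasurableSet E) {K : ℝ≥0∞}
    (hK : ∀ z, μ {y | (z - y, y) ∈ E} ≤ K) {g F H : G → ℝ≥0∞} (hg : Measurable g)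
    (hF : Measurable F) (hH : Measurable H) :
    ∫⁻ p in E, g p.1 * (F p.2 * H (p.1 + p.2)) ∂(μ.prod μ)
      ≤ K ^ (1 / 2 : ℝ) * (nrm μ g * nrm μ F * nrm μ H) := by
  -- the change of variables `(x, y) = (z - y, y)`
  set E' : Set (G × G) := (fun q : G × G => (q.1 - q.2, q.2)) ⁻¹' E with hE'd
  have hT : Measurable fun q : G × G => (q.1 - q.2, q.2) := by
    simp_rw [sub_eq_add_neg]; fun_prop
  have hE' : MeasurableSet E' := hT hE
  have hmp : MeasurePreserving (fun p : G × G => (p.2 + p.1, p.2)) (μ.prod μ) (μ.prod μ) :=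
    (Measure.measurePreserving_swap (μ := μ) (ν := μ)).comp
      ((measurePreserving_prod_add μ μ).comp
        (Measure.measurePreserving_swap (μ := μ) (ν := μ)))
  have hneg : Measurable fun q : G × G => g (q.1 - q.2) := by
    simp_rw [sub_eq_add_neg]; fun_prop
  have e := hmp.setLIntegral_comp_preimage hE'
    (f := fun q : G × G => H q.1 * (F q.2 * g (q.1 - q.2))) (by fun_prop)
  have e2 := hmp.lintegral_comp
    (f := fun q : G × G => (F q.2 * g (q.1 - q.2)) ^ 2) (by fun_prop)
  have hpre : (fun p : G × G => (p.2 + p.1, p.2)) ⁻¹' E' = E := by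
    ext p; simp [hE'd]
  rw [hpre] at e
  have hn : nrm (μ.prod μ) (fun q : G × G => F q.2 * g (q.1 - q.2)) = nrm μ g * nrm μ F := by
    rw [← nrm_prod_mul μ hg hF, nrm, nrm, ← e2]
    simp [mul_comm]
  calc _ = ∫⁻ q in E', H q.1 * (F q.2 * g (q.1 - q.2)) ∂(μ.prod μ) := by
        rw [← e]
        congr with p
        simp only [add_sub_cancel_left, add_comm p.1 p.2]
        ring
    _ ≤ nrm (μ.prod μ) (E'.indicator fun q => H q.1) *
        nrm (μ.prod μ) (fun q : G × G => F q.2 * g (q.1 - q.2)) :=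
        setLIntegral_cauchy_schwarz (μ.prod μ) hE' (hH.comp measurable_fst) (by fun_prop)
    _ ≤ (K ^ (1 / 2 : ℝ) * nrm μ H) * (nrm μ g * nrm μ F) := by
        rw [hn]; gcongr; exact nrm_indicator_fst_le μ hE' hK hH
    _ = _ := by ring

end Group

/-! ### Level sets of the phase -/

/-- Separation of values of the difference `(u+n)^m - (u-n)^m`, `m = 2j+1`, on the half-line
`u ≥ 0`: every term of its binomial expansion is nondecreasing in `u`, and the one of degree `2j`
already gives the bound. -/
lemma phase_mono {j : ℕ} (hj : 1 ≤ j) {n u v : ℝ} (hn : 0 ≤ n) (hv : 0 ≤ v) (huv : v ≤ u) :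
    2 * (2 * j + 1) * n * (u - v) ^ (2 * j) ≤
      ((u + n) ^ (2 * j + 1) - (u - n) ^ (2 * j + 1))
        - ((v + n) ^ (2 * j + 1) - (v - n) ^ (2 * j + 1)) := by
  have hexp : ∀ w : ℝ, (w + n) ^ (2 * j + 1) - (w - n) ^ (2 * j + 1)
      = ∑ i ∈ Finset.range (2 * j + 1 + 1),
        w ^ i * (n ^ (2 * j + 1 - i) - (-n) ^ (2 * j + 1 - i)) * ((2 * j + 1).choose i) := by
    intro w
    rw [sub_eq_add_neg w n, add_pow, add_pow, ← Finset.sum_sub_distrib]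
    refine Finset.sum_congr rfl fun i _ => by ring
  have hc : ∀ i, 0 ≤ n ^ i - (-n) ^ i := by
    intro i
    rcases Nat.even_or_odd i with h | h
    · rw [h.neg_pow]; simp
    · rw [h.neg_pow]; have := pow_nonneg hn i; linarith
  rw [hexp, hexp, ← Finset.sum_sub_distrib]
  have hterm : ∀ i ∈ Finset.range (2 * j + 1 + 1), 0 ≤
      u ^ i * (n ^ (2 * j + 1 - i) - (-n) ^ (2 * j + 1 - i)) * ((2 * j + 1).choose i : ℝ)
      - v ^ i * (n ^ (2 * j + 1 - i) - (-n) ^ (2 * j + 1 - i)) * ((2 * j + 1).choose i) := by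
    intro i _
    have := hc (2 * j + 1 - i)
    rw [sub_nonneg]
    gcongr
  refine le_trans ?_ (Finset.single_le_sum hterm (a := 2 * j) (by simp))
  have h1 : 2 * j + 1 - 2 * j = 1 := by omega
  rw [h1, Nat.choose_symm_add, Nat.choose_one_right]
  have h2 : (u - v) ^ (2 * j) ≤ u ^ (2 * j) - v ^ (2 * j) := by
    have := pow_add_pow_le (sub_nonneg.2 huv) hv (n := 2 * j) (by omega)
    rw [sub_add_cancel] at this
    linarith
  have h3 : 0 ≤ 2 * (2 * j + 1) * n := by positivity
  have := mul_le_mul_of_nonneg_left h2 h3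
  push_cast
  linarith

/-- The separation of values on the whole line, by parity in `u` and in `w`. -/
lemma phase_lower {j : ℕ} (hj : 1 ≤ j) (w u v : ℝ) :
    2 * (2 * j + 1) * |w| * (|u| - |v|) ^ (2 * j) ≤
      |((u + w) ^ (2 * j + 1) - (u - w) ^ (2 * j + 1))
        - ((v + w) ^ (2 * j + 1) - (v - w) ^ (2 * j + 1))| := by
  have hodd : Odd (2 * j + 1) := ⟨j, rfl⟩
  -- the phase is even in `u` and odd in `w`
  have hev : ∀ w u : ℝ, (|u| + w) ^ (2 * j + 1) - (|u| - w) ^ (2 * j + 1)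
      = (u + w) ^ (2 * j + 1) - (u - w) ^ (2 * j + 1) := by
    intro w u
    rcases abs_choice u with h | h <;> rw [h]
    rw [show -u + w = -(u - w) by ring, show -u - w = -(u + w) by ring, hodd.neg_pow,
      hodd.neg_pow]
    ring
  have hpos : ∀ w u v : ℝ, 0 ≤ w → 2 * (2 * j + 1) * w * (|u| - |v|) ^ (2 * j) ≤
      |((u + w) ^ (2 * j + 1) - (u - w) ^ (2 * j + 1))
        - ((v + w) ^ (2 * j + 1) - (v - w) ^ (2 * j + 1))| := by
    intro w u v hw
    rw [← hev w u, ← hev w v]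
    rcases le_total |v| |u| with h | h
    · exact (phase_mono hj hw (abs_nonneg v) h).trans (le_abs_self _)
    · rw [abs_sub_comm, ← (even_two_mul j).neg_pow, neg_sub]
      exact (phase_mono hj hw (abs_nonneg u) h).trans (le_abs_self _)
  rcases le_total 0 w with h | h
  · rw [abs_of_nonneg h]; exact hpos w u v h
  · rw [abs_of_nonpos h]
    refine (hpos (-w) u v (by linarith)).trans (le_of_eq ?_)
    rw [← abs_neg]
    congr 1
    ring

lemma count_le_of_dist {S : Set ℤ} {D : ℝ} (hD : 0 ≤ D)
    (h : ∀ k ∈ S, ∀ l ∈ S, |(k : ℝ) - l| ≤ D) :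
    Measure.count S ≤ ENNReal.ofReal (2 * D + 1) := by
  rcases S.eq_empty_or_nonempty with rfl | ⟨l, hl⟩
  · simp
  have hsub : S ⊆ (Finset.Icc (l - ⌊D⌋) (l + ⌊D⌋) : Finset ℤ) := by
    intro k hk
    have h1 := h k hk l hl
    have h2 : |k - l| ≤ ⌊D⌋ := Int.le_floor.2 (by push_cast; exact h1)
    rw [abs_le] at h2
    simp only [Finset.coe_Icc, Set.mem_Icc]
    omega
  refine (measure_mono hsub).trans ?_
  rw [Measure.count_apply_finset, Int.card_Icc, ← ENNReal.ofReal_natCast]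
  apply ENNReal.ofReal_le_ofReal
  have h0 : 0 ≤ ⌊D⌋ := Int.floor_nonneg.2 hD
  have h3 : ((l + ⌊D⌋ + 1 - (l - ⌊D⌋)).toNat : ℤ) = 2 * ⌊D⌋ + 1 := by omega
  have h4 : (((l + ⌊D⌋ + 1 - (l - ⌊D⌋)).toNat : ℕ) : ℝ) = 2 * (⌊D⌋ : ℝ) + 1 := by
    exact_mod_cast h3
  rw [h4]
  linarith [Int.floor_le D]

/-- The level sets of the phase: for `|n| ≥ N`, at most `O(N)` frequencies `k` satisfy
`|t - ((k+n)^m - k^m)| ≤ 2N^m`. On each of the two monotonicity branches (`k ≥ -n/2`, `k ≤ -n/2`)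
they are `2N`-close to each other. -/
lemma count_phase {j : ℕ} (hj : 1 ≤ j) (n : ℤ) (t : ℝ) {N : ℝ} (hN : 1 ≤ N) (hn : N ≤ |(n : ℝ)|) :
    Measure.count {k : ℤ | |t - (((k + n : ℤ) : ℝ) ^ (2 * j + 1) - (k : ℝ) ^ (2 * j + 1))|
      ≤ 2 * N ^ (2 * j + 1)} ≤ ENNReal.ofReal (12 * N) := by
  set S := {k : ℤ | |t - (((k + n : ℤ) : ℝ) ^ (2 * j + 1) - (k : ℝ) ^ (2 * j + 1))|
      ≤ 2 * N ^ (2 * j + 1)} with hS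
  have key : ∀ k ∈ S, ∀ l ∈ S, abs (|(k : ℝ) + n / 2| - |(l : ℝ) + n / 2|) ≤ 2 * N := by
    intro k hk l hl
    simp only [hS, Set.mem_ofPred_eq] at hk hl
    have h1 := phase_lower hj ((n : ℝ) / 2) ((k : ℝ) + n / 2) ((l : ℝ) + n / 2)
    have e1 : ∀ k : ℝ, k + n / 2 + n / 2 = k + n := fun k => by ring
    have e2 : ∀ k : ℝ, k + (n : ℝ) / 2 - n / 2 = k := fun k => by ring
    rw [e1, e2, e1, e2] at h1
    push_cast at hk hl
    have h2 : |(((k : ℝ) + n) ^ (2 * j + 1) - (k : ℝ) ^ (2 * j + 1)) -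
        (((l : ℝ) + n) ^ (2 * j + 1) - (l : ℝ) ^ (2 * j + 1))| ≤ 4 * N ^ (2 * j + 1) := by
      rw [abs_le] at hk hl ⊢
      constructor <;> linarith
    have h3 := h1.trans h2
    set x := |(k : ℝ) + n / 2| - |(l : ℝ) + n / 2|
    rw [← (even_two_mul j).pow_abs x] at h3
    have hw : |(n : ℝ) / 2| = |(n : ℝ)| / 2 := by rw [abs_div]; norm_num
    rw [hw] at h3
    by_contra hcon
    push Not at hcon
    have h4 : (2 * N) ^ (2 * j) < |x| ^ (2 * j) :=
      pow_lt_pow_left₀ hcon (by linarith) (by omega)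
    have hp : 0 < N ^ (2 * j) := by positivity
    have h5 : 4 * N ^ (2 * j) ≤ (2 * N) ^ (2 * j) := by
      rw [mul_pow]
      have : (4 : ℝ) ≤ 2 ^ (2 * j) := by
        calc (4 : ℝ) = 2 ^ 2 := by norm_num
          _ ≤ 2 ^ (2 * j) := pow_le_pow_right₀ (by norm_num) (by omega)
      gcongr
    have hj' : (1 : ℝ) ≤ j := by exact_mod_cast hj
    have h6 : N * |x| ^ (2 * j) ≤ 2 * (2 * j + 1) * (|(n : ℝ)| / 2) * |x| ^ (2 * j) := by
      have : N ≤ 2 * (2 * j + 1) * (|(n : ℝ)| / 2) := by nlinarith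
      gcongr
    have h7 : N * (4 * N ^ (2 * j)) < N * |x| ^ (2 * j) := by
      have : 4 * N ^ (2 * j) < |x| ^ (2 * j) := h5.trans_lt h4
      exact mul_lt_mul_of_pos_left this (by linarith)
    rw [pow_succ] at h3
    linarith
  have hsplit : S ⊆ (S ∩ {k | 0 ≤ (k : ℝ) + n / 2}) ∪ (S ∩ {k | (k : ℝ) + n / 2 ≤ 0}) := by
    intro k hk
    rcases le_total 0 ((k : ℝ) + n / 2) with h | h
    · exact Or.inl ⟨hk, h⟩
    · exact Or.inr ⟨hk, h⟩
  refine (measure_mono hsplit).trans ((measure_union_le _ _).trans ?_)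
  have hA : Measure.count (S ∩ {k | 0 ≤ (k : ℝ) + n / 2}) ≤ ENNReal.ofReal (2 * (2 * N) + 1) := by
    refine count_le_of_dist (by linarith) fun k hk l hl => ?_
    have h := key k hk.1 l hl.1
    rw [abs_of_nonneg (a := (k : ℝ) + n / 2) hk.2, abs_of_nonneg (a := (l : ℝ) + n / 2) hl.2] at h
    simpa using h
  have hB : Measure.count (S ∩ {k | (k : ℝ) + n / 2 ≤ 0}) ≤ ENNReal.ofReal (2 * (2 * N) + 1) := by
    refine count_le_of_dist (by linarith) fun k hk l hl => ?_
    have h := key k hk.1 l hl.1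
    rw [abs_of_nonpos (a := (k : ℝ) + n / 2) hk.2, abs_of_nonpos (a := (l : ℝ) + n / 2) hl.2,
      abs_sub_comm] at h
    simpa [sub_eq_add_neg, add_comm, add_left_comm] using h
  refine (add_le_add hA hB).trans ?_
  rw [← ENNReal.ofReal_add (by linarith) (by linarith)]
  exact ENNReal.ofReal_le_ofReal (by linarith)

/-! ### Functions localized in modulation -/

/-- Counting measure times Lebesgue measure on the frequency space `ℤ × ℝ`. -/
abbrev muX : Measure (ℤ × ℝ) := Measure.count.prod volume

lemma measurable_sig (j : ℕ) : Measurable fun p : ℤ × ℝ => sig j p.1 p.2 := by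
  have : Measurable fun k : ℤ => (k : ℝ) ^ (2 * j + 1) := measurable_of_countable _
  exact measurable_snd.sub (this.comp measurable_fst)

lemma measure_tube (S : Set ℤ) (c : ℤ → ℝ) (M : ℝ) :
    muX {y : ℤ × ℝ | y.1 ∈ S ∧ |y.2 - c y.1| ≤ M} ≤ ENNReal.ofReal (2 * M) * Measure.count S := by
  have hc : Measurable c := measurable_of_countable c
  have hS : MeasurableSet S := S.to_countable.measurableSet
  have hm : MeasurableSet {y : ℤ × ℝ | y.1 ∈ S ∧ |y.2 - c y.1| ≤ M} := by
    refine (measurable_fst hS).inter ?_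
    exact measurableSet_le (measurable_snd.sub (hc.comp measurable_fst)).abs measurable_const
  rw [Measure.prod_apply hm]
  calc _ ≤ ∫⁻ k, S.indicator (fun _ => ENNReal.ofReal (2 * M)) k ∂Measure.count := by
        refine lintegral_mono fun k => ?_
        by_cases hk : k ∈ S
        · rw [Set.indicator_of_mem hk]
          refine (measure_mono (t := Metric.closedBall (c k) M) ?_).trans ?_
          · intro t ht
            exact ht.2
          · rw [Real.volume_closedBall]
        · rw [Set.indicator_of_notMem hk]
          refine le_of_eq (measure_mono_null (t := ∅) ?_ measure_empty)
          intro t ht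
          exact hk ht.1
    _ = _ := by rw [lintegral_indicator hS, setLIntegral_const]

/-- The estimate for functions localized in modulation: `|σ| ≤ M₁` on the support of `F` and
`|σ| ≤ M₂` on the support of `H`, with `max M₁ M₂ = N^m`. If the spatial frequency of `g` is at
least `N`, Cauchy–Schwarz in the variables of `F` costs the size of a level set of the phase; if it
is smaller than `N`, Cauchy–Schwarz is applied to another pairing, and only the number of possible
frequencies of `g` enters. -/
lemma tri_core {j : ℕ} (hj : 1 ≤ j) {M₁ M₂ N : ℝ} (hN : 1 ≤ N) (hM : max M₁ M₂ = N ^ (2 * j + 1))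
    {g F H : ℤ × ℝ → ℝ≥0∞} (hg : Measurable g) (hF : Measurable F) (hH : Measurable H)
    (hFs : ∀ y, F y ≠ 0 → |sig j y.1 y.2| ≤ M₁) (hHs : ∀ y, H y ≠ 0 → |sig j y.1 y.2| ≤ M₂) :
    ∫⁻ p, g p.1 * (F p.2 * H (p.1 + p.2)) ∂(muX.prod muX) ≤
      2 * (ENNReal.ofReal (24 * min M₁ M₂ * N) ^ (1 / 2 : ℝ) *
        (nrm muX g * nrm muX F * nrm muX H)) := by
  set E : Set ((ℤ × ℝ) × (ℤ × ℝ)) := {p | |sig j p.2.1 p.2.2| ≤ M₁ ∧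
    |sig j (p.1 + p.2).1 (p.1 + p.2).2| ≤ M₂} with hE
  have hEm : MeasurableSet E := by
    refine MeasurableSet.inter (s₁ := {p : (ℤ × ℝ) × (ℤ × ℝ) | |sig j p.2.1 p.2.2| ≤ M₁})
      (s₂ := {p : (ℤ × ℝ) × (ℤ × ℝ) | |sig j (p.1 + p.2).1 (p.1 + p.2).2| ≤ M₂}) ?_ ?_
    · exact measurableSet_le ((measurable_sig j).comp measurable_snd).abs measurable_const
    · exact measurableSet_le
        ((measurable_sig j).comp (measurable_fst.add measurable_snd)).abs measurable_const
  set A : Set ((ℤ × ℝ) × (ℤ × ℝ)) := {p | N ≤ |(p.1.1 : ℝ)|} with hA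
  have hAm : MeasurableSet A := by
    have : Measurable fun k : ℤ => |(k : ℝ)| := measurable_of_countable _
    exact measurableSet_le measurable_const (this.comp (measurable_fst.comp measurable_fst))
  have hm12 : ∀ {c : ℝ≥0∞}, (c ≤ ENNReal.ofReal (2 * M₁) * ENNReal.ofReal (12 * N)) →
      (c ≤ ENNReal.ofReal (2 * M₂) * ENNReal.ofReal (12 * N)) →
      c ≤ ENNReal.ofReal (24 * min M₁ M₂ * N) := by
    intro c h1 h2
    rw [← ENNReal.ofReal_mul' (by linarith)] at h1 h2
    rcases min_choice M₁ M₂ with h | h <;> rw [h]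
    · exact h1.trans (ENNReal.ofReal_le_ofReal (by linarith))
    · exact h2.trans (ENNReal.ofReal_le_ofReal (by linarith))
  have hball : ∀ z : ℤ, Measure.count {k : ℤ | |(k : ℝ) - z| < N} ≤ ENNReal.ofReal (12 * N) := by
    intro z
    refine (count_le_of_dist (D := 2 * N) (by linarith) fun k hk l hl => ?_).trans
      (ENNReal.ofReal_le_ofReal (by linarith))
    simp only [Set.mem_ofPred_eq, abs_lt] at hk hl
    rw [abs_le]
    constructor <;> linarith
  have hhigh : ∫⁻ p in E ∩ A, g p.1 * (F p.2 * H (p.1 + p.2)) ∂(muX.prod muX) ≤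
      ENNReal.ofReal (24 * min M₁ M₂ * N) ^ (1 / 2 : ℝ) *
        (nrm muX g * nrm muX F * nrm muX H) := by
    refine tri_fst muX (hEm.inter hAm) (fun x => ?_) hg hF hH
    by_cases hx : N ≤ |(x.1 : ℝ)|
    swap
    · refine le_trans (le_of_eq (measure_mono_null (t := ∅) ?_ measure_empty)) zero_le
      rintro y ⟨_, hy⟩
      exact hx hy
    have hcount := count_phase hj x.1 x.2 hN hx
    set S := {k : ℤ | |x.2 - (((k + x.1 : ℤ) : ℝ) ^ (2 * j + 1) - (k : ℝ) ^ (2 * j + 1))|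
      ≤ 2 * N ^ (2 * j + 1)}
    have hS : ∀ y : ℤ × ℝ, (x, y) ∈ E → y.1 ∈ S := by
      rintro y ⟨h1, h2⟩
      have h3 : M₁ ≤ N ^ (2 * j + 1) := hM ▸ le_max_left _ _
      have h4 : M₂ ≤ N ^ (2 * j + 1) := hM ▸ le_max_right _ _
      simp only [sig, Prod.fst_add, Prod.snd_add] at h1 h2
      show |x.2 - (((y.1 + x.1 : ℤ) : ℝ) ^ (2 * j + 1) - (y.1 : ℝ) ^ (2 * j + 1))|
        ≤ 2 * N ^ (2 * j + 1)
      rw [add_comm y.1 x.1]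
      rw [abs_le] at h1 h2 ⊢
      constructor <;> linarith
    apply hm12
    · refine le_trans (measure_mono ?_) ((measure_tube S (fun k => (k : ℝ) ^ (2 * j + 1)) M₁).trans
        (by gcongr))
      rintro y ⟨hy, -⟩
      exact ⟨hS y hy, hy.1⟩
    · refine le_trans (measure_mono ?_) ((measure_tube S
        (fun k => ((x.1 + k : ℤ) : ℝ) ^ (2 * j + 1) - x.2) M₂).trans (by gcongr))
      rintro y ⟨hy, -⟩
      refine ⟨hS y hy, le_trans (le_of_eq ?_) hy.2⟩
      simp only [sig, Prod.fst_add, Prod.snd_add]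
      congr 1
      ring
  have hlow : ∫⁻ p in E ∩ Aᶜ, g p.1 * (F p.2 * H (p.1 + p.2)) ∂(muX.prod muX) ≤
      ENNReal.ofReal (24 * min M₁ M₂ * N) ^ (1 / 2 : ℝ) *
        (nrm muX g * nrm muX F * nrm muX H) := by
    rcases le_total M₁ M₂ with h12 | h12
    · refine tri_add muX (hEm.inter hAm.compl) (fun z => ?_) hg hF hH
      have hb : ENNReal.ofReal (2 * M₁) * ENNReal.ofReal (12 * N)
          ≤ ENNReal.ofReal (24 * min M₁ M₂ * N) := by
        rw [← ENNReal.ofReal_mul' (by linarith), min_eq_left h12]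
        exact ENNReal.ofReal_le_ofReal (by linarith)
      refine le_trans (measure_mono ?_) ((measure_tube {k : ℤ | |(k : ℝ) - z.1| < N}
        (fun k => (k : ℝ) ^ (2 * j + 1)) M₁).trans (le_trans (by gcongr; exact hball z.1) hb))
      rintro y ⟨hy, hyA⟩
      refine ⟨?_, hy.1⟩
      have h := lt_of_not_ge (a := |((z - y).1 : ℝ)|) (b := N) hyA
      simp only [Prod.fst_sub] at h
      push_cast at h
      rw [abs_sub_comm] at h
      exact h
    · refine tri_snd muX (hEm.inter hAm.compl) (fun y => ?_) hg hF hH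
      have hb : ENNReal.ofReal (2 * M₂) * ENNReal.ofReal (12 * N)
          ≤ ENNReal.ofReal (24 * min M₁ M₂ * N) := by
        rw [← ENNReal.ofReal_mul' (by linarith), min_eq_right h12]
        exact ENNReal.ofReal_le_ofReal (by linarith)
      refine le_trans (measure_mono ?_) ((measure_tube {k : ℤ | |(k : ℝ) - (0 : ℤ)| < N}
        (fun k => ((k + y.1 : ℤ) : ℝ) ^ (2 * j + 1) - y.2) M₂).trans
          (le_trans (by gcongr; exact hball 0) hb))
      rintro x ⟨hx, hxA⟩
      refine ⟨?_, le_trans (le_of_eq ?_) hx.2⟩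
      · have h := lt_of_not_ge (a := |(x.1 : ℝ)|) (b := N) hxA
        simpa using h
      · simp only [sig, Prod.fst_add, Prod.snd_add]
        congr 1
        ring
  calc ∫⁻ p, g p.1 * (F p.2 * H (p.1 + p.2)) ∂(muX.prod muX)
      ≤ ∫⁻ p in E, g p.1 * (F p.2 * H (p.1 + p.2)) ∂(muX.prod muX) := by
        rw [← lintegral_indicator hEm]
        refine lintegral_mono fun p => ?_
        by_cases hp : p ∈ E
        · rw [Set.indicator_of_mem hp]
        · rw [Set.indicator_of_notMem hp]
          have : F p.2 = 0 ∨ H (p.1 + p.2) = 0 := by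
            by_contra! hcon
            exact hp ⟨hFs _ hcon.1, hHs _ hcon.2⟩
          rcases this with h | h <;> simp [h]
    _ ≤ ∫⁻ p in E ∩ A, g p.1 * (F p.2 * H (p.1 + p.2)) ∂(muX.prod muX)
        + ∫⁻ p in E ∩ Aᶜ, g p.1 * (F p.2 * H (p.1 + p.2)) ∂(muX.prod muX) := by
        rw [← Set.inter_union_compl E A]
        refine (lintegral_union_le _ _ _).trans (le_of_eq ?_)
        simp only [Set.inter_union_compl]
    _ ≤ _ := by rw [two_mul]; exact add_le_add hhigh hlow

/-! ### Summation over dyadic modulations -/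

/-- The dyadic modulation level: `lev j p = i` when `2^i ≤ ⟨σ⟩ < 2^{i+1}` at `p = (k, τ)`. -/
def lev (j : ℕ) (p : ℤ × ℝ) : ℕ := Nat.log 2 ⌊jap (sig j p.1 p.2)⌋₊

/-- The part of `F` living on the modulation level `i`. -/
def loc (j : ℕ) (F : ℤ × ℝ → ℝ≥0∞) (i : ℕ) (p : ℤ × ℝ) : ℝ≥0∞ := if i = lev j p then F p else 0

lemma measurable_jap : Measurable jap := by
  unfold jap; fun_prop

lemma one_le_jap (x : ℝ) : 1 ≤ jap x := by
  rw [jap, Real.one_le_sqrt]; nlinarith [sq_nonneg x]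

lemma abs_le_jap (x : ℝ) : |x| ≤ jap x := by
  rw [jap]; exact Real.abs_le_sqrt (by linarith)

lemma measurable_lev (j : ℕ) : Measurable (lev j) := by
  have h : Measurable fun n : ℕ => Nat.log 2 n := measurable_of_countable _
  exact h.comp (Nat.measurable_floor.comp (measurable_jap.comp (measurable_sig j)))

lemma measurable_loc (j : ℕ) {F : ℤ × ℝ → ℝ≥0∞} (hF : Measurable F) (i : ℕ) :
    Measurable (loc j F i) :=
  Measurable.ite (measurableSet_eq_fun measurable_const (measurable_lev j)) hF measurable_const

lemma two_pow_lev_le (j : ℕ) (p : ℤ × ℝ) : (2 : ℝ) ^ lev j p ≤ jap (sig j p.1 p.2) := by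
  have h1 := one_le_jap (sig j p.1 p.2)
  have h0 : ⌊jap (sig j p.1 p.2)⌋₊ ≠ 0 := (Nat.floor_pos.2 h1).ne'
  calc (2 : ℝ) ^ lev j p ≤ (⌊jap (sig j p.1 p.2)⌋₊ : ℝ) := by
        exact_mod_cast Nat.pow_log_le_self 2 h0
    _ ≤ _ := Nat.floor_le (by linarith)

lemma jap_le_two_pow_lev (j : ℕ) (p : ℤ × ℝ) : jap (sig j p.1 p.2) ≤ (2 : ℝ) ^ (lev j p + 1) := by
  have h2 : ⌊jap (sig j p.1 p.2)⌋₊ + 1 ≤ 2 ^ (lev j p + 1) :=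
    Nat.lt_pow_succ_log_self (by norm_num) _
  calc jap (sig j p.1 p.2) ≤ (⌊jap (sig j p.1 p.2)⌋₊ : ℝ) + 1 := (Nat.lt_floor_add_one _).le
    _ ≤ _ := by exact_mod_cast h2

lemma tsum_loc (j : ℕ) (F : ℤ × ℝ → ℝ≥0∞) (p : ℤ × ℝ) : ∑' i, loc j F i p = F p := by
  simp only [loc]; exact tsum_ite_eq _ _

lemma nrm_count_nrm_loc (j : ℕ) {F : ℤ × ℝ → ℝ≥0∞} (hF : Measurable F) :
    nrm Measure.count (fun i => nrm muX (loc j F i)) = nrm muX F := by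
  have hsq : ∀ i, nrm muX (loc j F i) ^ 2 = ∫⁻ p, loc j F i p ^ 2 ∂muX := by
    intro i
    rw [nrm, ← ENNReal.rpow_natCast, ← ENNReal.rpow_mul]
    norm_num
  rw [nrm, lintegral_count]
  simp_rw [hsq]
  rw [← lintegral_tsum fun i => ((measurable_loc j hF i).pow_const 2).aemeasurable, nrm]
  congr with p
  rw [← tsum_loc j (fun p => F p ^ 2) p]
  congr with i
  by_cases h : i = lev j p <;> simp [loc, h]

lemma weight_le {j : ℕ} {b : ℝ} (hb : 0 ≤ b) (F : ℤ × ℝ → ℝ≥0∞) (p : ℤ × ℝ) :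
    ENNReal.ofReal (jap (sig j p.1 p.2) ^ (-b)) * F p ≤
      ∑' i : ℕ, ENNReal.ofReal (2 ^ (-(i * b))) * loc j F i p := by
  nth_rw 1 [← tsum_loc j F p]
  rw [← ENNReal.tsum_mul_left]
  refine ENNReal.tsum_le_tsum fun i => ?_
  by_cases h : i = lev j p
  · subst h
    gcongr
    have h1 := two_pow_lev_le j p
    calc jap (sig j p.1 p.2) ^ (-b) ≤ ((2 : ℝ) ^ lev j p) ^ (-b) :=
          Real.rpow_le_rpow_of_nonpos (by positivity) h1 (by linarith)
      _ = _ := by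
          rw [← Real.rpow_natCast, ← Real.rpow_mul (by norm_num)]
          congr 1; ring
  · simp [loc, h]

/-- A bilinear form on `ℓ²(ℕ)` whose kernel decays geometrically off the diagonal is bounded:
Cauchy–Schwarz on each diagonal `i - l = ± d`, then sum over `d`. -/
lemma sum_offdiag (ρ : ℝ≥0∞) (x y : ℕ → ℝ≥0∞) :
    ∑' i, ∑' l, ρ ^ Nat.dist i l * (x i * y l) ≤
      (∑' d : ℕ, ρ ^ d) * (2 * (nrm Measure.count x * nrm Measure.count y)) := by
  have hshift : ∀ (d : ℕ) (z : ℕ → ℝ≥0∞), nrm Measure.count (fun i => z (i + d))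
      ≤ nrm Measure.count z := by
    intro d z
    rw [nrm, nrm, lintegral_count, lintegral_count]
    exact ENNReal.rpow_le_rpow
      (ENNReal.tsum_comp_le_tsum_of_injective (add_left_injective d) (fun i => z i ^ 2))
      (by norm_num)
  have hdiag : ∀ z w : ℕ → ℝ≥0∞, ∑' i, z i * w i ≤ nrm Measure.count z * nrm Measure.count w := by
    intro z w
    have := cauchy_schwarz Measure.count (measurable_of_countable z) (measurable_of_countable w)
    rwa [lintegral_count] at this
  calc ∑' i, ∑' l, ρ ^ Nat.dist i l * (x i * y l)
      ≤ ∑' i, ∑' l, ∑' d, ((if l = i + d then ρ ^ d * (x i * y l) else 0) +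
          (if i = l + d then ρ ^ d * (x i * y l) else 0)) := by
        refine ENNReal.tsum_le_tsum fun i => ENNReal.tsum_le_tsum fun l => ?_
        refine le_trans ?_ (ENNReal.le_tsum (Nat.dist i l))
        rcases le_total i l with h | h
        · rw [if_pos (show l = i + Nat.dist i l by rw [Nat.dist_eq_sub_of_le h]; omega)]
          exact le_self_add
        · rw [if_pos (show i = l + Nat.dist i l by rw [Nat.dist_eq_sub_of_le_right h]; omega)]
          exact le_add_self
    _ = ∑' d, (∑' i, ρ ^ d * (x i * y (i + d)) + ∑' l, ρ ^ d * (x (l + d) * y l)) := by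
        simp_rw [ENNReal.tsum_add]
        congr 1
        · rw [ENNReal.tsum_comm]
          simp_rw [fun l => ENNReal.tsum_comm (α := ℕ) (β := ℕ)
            (f := fun i d => if l = i + d then ρ ^ d * (x i * y l) else 0)]
          rw [ENNReal.tsum_comm]
          congr with d
          rw [ENNReal.tsum_comm]
          congr with i
          exact tsum_ite_eq (i + d) fun l => ρ ^ d * (x i * y l)
        · simp_rw [fun i => ENNReal.tsum_comm (α := ℕ) (β := ℕ)
            (f := fun l d => if i = l + d then ρ ^ d * (x i * y l) else 0)]
          rw [ENNReal.tsum_comm]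
          congr with d
          rw [ENNReal.tsum_comm]
          congr with l
          exact tsum_ite_eq (l + d) fun i => ρ ^ d * (x i * y l)
    _ ≤ ∑' d, ρ ^ d * (2 * (nrm Measure.count x * nrm Measure.count y)) := by
        refine ENNReal.tsum_le_tsum fun d => ?_
        rw [ENNReal.tsum_mul_left, ENNReal.tsum_mul_left, ← mul_add, two_mul]
        gcongr
        · refine (hdiag x fun i => y (i + d)).trans ?_
          gcongr
          exact hshift d y
        · refine (hdiag (fun i => x (i + d)) y).trans ?_
          gcongr
          exact hshift d x
    _ = _ := by rw [ENNReal.tsum_mul_right]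

/-- Exponent bookkeeping for the levels `i` (of `F`) and `l` (of `H`), with `m = 2j+1`. The
hypothesis on `a + b` controls the common part `min i l`, the one on `min a b` the difference. -/
lemma exponent_le {j : ℕ} {a b : ℝ} (hab : ((j : ℝ) + 1) / (2 * (j : ℝ) + 1) ≤ a + b) (i l : ℕ) :
    ((min i l : ℕ) + 1 : ℝ) / 2 + ((max i l : ℕ) + 1 : ℝ) / (2 * (2 * j + 1)) - i * b - l * a
      ≤ 1 + Nat.dist i l * -(min a b - 1 / (2 * (2 * (j : ℝ) + 1))) := by
  set c : ℝ := 1 / (2 * (2 * (j : ℝ) + 1)) with hc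
  have hj0 : (0 : ℝ) ≤ j := Nat.cast_nonneg j
  have hc2 : c ≤ 1 / 2 := by
    rw [hc]; apply one_div_le_one_div_of_le <;> linarith
  have hab' : 1 / 2 + c ≤ a + b := by
    refine le_trans (le_of_eq ?_) hab
    rw [hc]; field_simp; ring
  have hdiv : ((max i l : ℕ) + 1 : ℝ) / (2 * (2 * j + 1)) = ((max i l : ℕ) + 1 : ℝ) * c := by
    rw [hc]; ring
  rw [hdiv]
  have ha := min_le_left a b
  have hb := min_le_right a b
  rcases le_total i l with h | h
  · obtain ⟨d, rfl⟩ := Nat.exists_eq_add_of_le h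
    have hd : Nat.dist i (i + d) = d := by rw [Nat.dist_eq_sub_of_le h]; omega
    rw [hd, min_eq_left h, max_eq_right h]
    push_cast
    have h1 : (i : ℝ) * (1 / 2 + c) ≤ i * (a + b) := by gcongr
    have h2 : (d : ℝ) * min a b ≤ d * a := by gcongr
    nlinarith
  · obtain ⟨d, rfl⟩ := Nat.exists_eq_add_of_le h
    have hd : Nat.dist (l + d) l = d := by rw [Nat.dist_eq_sub_of_le_right h]; omega
    rw [hd, min_eq_right h, max_eq_left h]
    push_cast
    have h1 : (l : ℝ) * (1 / 2 + c) ≤ l * (a + b) := by gcongr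
    have h2 : (d : ℝ) * min a b ≤ d * b := by gcongr
    nlinarith

/-- The contribution of one pair of modulation levels, with the weights included, decays
geometrically in the distance of the levels. -/
lemma tri_level {j : ℕ} (hj : 1 ≤ j) {a b : ℝ}
    (hab : ((j : ℝ) + 1) / (2 * (j : ℝ) + 1) ≤ a + b) {g F H : ℤ × ℝ → ℝ≥0∞}
    (hg : Measurable g) (hF : Measurable F) (hH : Measurable H) (i l : ℕ) :
    ENNReal.ofReal (2 ^ (-(i * b))) * ENNReal.ofReal (2 ^ (-(l * a))) *
      ∫⁻ p, g p.1 * (loc j F i p.2 * loc j H l (p.1 + p.2)) ∂(muX.prod muX) ≤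
    ENNReal.ofReal (2 ^ (-(min a b - 1 / (2 * (2 * (j : ℝ) + 1))))) ^ Nat.dist i l *
      (20 * (nrm muX g * nrm muX (loc j F i) * nrm muX (loc j H l))) := by
  have hm0 : (0 : ℝ) < 2 * j + 1 := by positivity
  set N : ℝ := 2 ^ (((max i l : ℕ) + 1 : ℝ) / (2 * j + 1)) with hN
  have hN1 : 1 ≤ N := Real.one_le_rpow (by norm_num) (by positivity)
  have hNm : max ((2 : ℝ) ^ (i + 1)) (2 ^ (l + 1)) = N ^ (2 * j + 1) := by
    have : N ^ (2 * j + 1) = (2 : ℝ) ^ (max i l + 1) := by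
      rw [hN, ← Real.rpow_natCast, ← Real.rpow_mul (by norm_num), ← Real.rpow_natCast]
      congr 1
      push_cast
      field_simp
    rw [this]
    rcases le_total i l with h | h
    · rw [max_eq_right h, max_eq_right]
      exact pow_le_pow_right₀ (by norm_num) (by omega)
    · rw [max_eq_left h, max_eq_left]
      exact pow_le_pow_right₀ (by norm_num) (by omega)
  have hmin : min ((2 : ℝ) ^ (i + 1)) (2 ^ (l + 1)) = 2 ^ ((min i l : ℕ) + 1 : ℝ) := by
    rw [← Nat.cast_add_one, Real.rpow_natCast]
    rcases le_total i l with h | h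
    · rw [min_eq_left h, min_eq_left]
      exact pow_le_pow_right₀ (by norm_num) (by omega)
    · rw [min_eq_right h, min_eq_right]
      exact pow_le_pow_right₀ (by norm_num) (by omega)
  have hsupp : ∀ (F : ℤ × ℝ → ℝ≥0∞) (i : ℕ) (y : ℤ × ℝ), loc j F i y ≠ 0 →
      |sig j y.1 y.2| ≤ 2 ^ (i + 1) := by
    intro F i y hy
    have : i = lev j y := by
      by_contra h
      simp [loc, h] at hy
    subst this
    exact (abs_le_jap _).trans (jap_le_two_pow_lev j y)
  have hcore := tri_core hj hN1 hNm hg (measurable_loc j hF i) (measurable_loc j hH l)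
    (hsupp F i) (hsupp H l)
  have hconst : ENNReal.ofReal (2 ^ (-(i * b))) * ENNReal.ofReal (2 ^ (-(l * a))) *
      (2 * ENNReal.ofReal (24 * min ((2 : ℝ) ^ (i + 1)) (2 ^ (l + 1)) * N) ^ (1 / 2 : ℝ)) ≤
      ENNReal.ofReal (2 ^ (-(min a b - 1 / (2 * (2 * (j : ℝ) + 1))))) ^ Nat.dist i l * 20 := by
    have e2 : (2 : ℝ≥0∞) = ENNReal.ofReal 2 := by simp
    have e20 : (20 : ℝ≥0∞) = ENNReal.ofReal 20 := by simp
    rw [hmin, e2, e20, ENNReal.ofReal_rpow_of_nonneg (by positivity) (by norm_num),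
      ← ENNReal.ofReal_pow (by positivity), ← ENNReal.ofReal_mul (by positivity),
      ← ENNReal.ofReal_mul (by positivity), ← ENNReal.ofReal_mul (by positivity),
      ← ENNReal.ofReal_mul (by positivity)]
    apply ENNReal.ofReal_le_ofReal
    have h24 : (24 : ℝ) ^ (1 / 2 : ℝ) ≤ 5 := by
      rw [← Real.sqrt_eq_rpow, Real.sqrt_le_left (by norm_num)]; norm_num
    have hroot : ∀ x y : ℝ, (24 * (2 : ℝ) ^ x * 2 ^ y) ^ (1 / 2 : ℝ)
        = 24 ^ (1 / 2 : ℝ) * 2 ^ ((x + y) * (1 / 2)) := by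
      intro x y
      rw [mul_assoc, ← Real.rpow_add (by norm_num), Real.mul_rpow (by norm_num) (by positivity),
        ← Real.rpow_mul (by norm_num)]
    rw [hN, hroot, ← Real.rpow_add (by norm_num), ← Real.rpow_natCast (_ ^ _),
      ← Real.rpow_mul (by norm_num)]
    have hexp := exponent_le hab i l
    set R : ℝ := -(min a b - 1 / (2 * (2 * (j : ℝ) + 1)))
    calc _ = 2 * (24 : ℝ) ^ (1 / 2 : ℝ) * (2 ^ (-(i * b) + -(l * a)) *
          2 ^ ((((min i l : ℕ) + 1 : ℝ) + ((max i l : ℕ) + 1 : ℝ) / (2 * j + 1)) * (1 / 2))) := by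
          ring
      _ = 2 * (24 : ℝ) ^ (1 / 2 : ℝ) * 2 ^ (((min i l : ℕ) + 1 : ℝ) / 2 +
          ((max i l : ℕ) + 1 : ℝ) / (2 * (2 * j + 1)) - i * b - l * a) := by
          rw [← Real.rpow_add (by norm_num)]
          congr 2
          field_simp
          ring
      _ ≤ 2 * 5 * 2 ^ (1 + Nat.dist i l * R) := by
          gcongr
          norm_num
      _ = _ := by
          rw [Real.rpow_add (by norm_num), Real.rpow_one, mul_comm R]
          ring
  calc _ ≤ ENNReal.ofReal (2 ^ (-(i * b))) * ENNReal.ofReal (2 ^ (-(l * a))) *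
        (2 * (ENNReal.ofReal (24 * min ((2 : ℝ) ^ (i + 1)) (2 ^ (l + 1)) * N) ^ (1 / 2 : ℝ) *
        (nrm muX g * nrm muX (loc j F i) * nrm muX (loc j H l)))) := by gcongr
    _ = (ENNReal.ofReal (2 ^ (-(i * b))) * ENNReal.ofReal (2 ^ (-(l * a))) *
        (2 * ENNReal.ofReal (24 * min ((2 : ℝ) ^ (i + 1)) (2 ^ (l + 1)) * N) ^ (1 / 2 : ℝ))) *
        (nrm muX g * nrm muX (loc j F i) * nrm muX (loc j H l)) := by ring
    _ ≤ _ := by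
        rw [← mul_assoc (_ ^ _)]
        gcongr

/-- The trilinear estimate dual to the claim. -/
lemma tri_main {j : ℕ} (hj : 1 ≤ j) {a b : ℝ} (ha : 0 ≤ a) (hb : 0 ≤ b)
    (hab : ((j : ℝ) + 1) / (2 * (j : ℝ) + 1) ≤ a + b) {g F H : ℤ × ℝ → ℝ≥0∞}
    (hg : Measurable g) (hF : Measurable F) (hH : Measurable H) :
    ∫⁻ p, g p.1 * (ENNReal.ofReal (jap (sig j p.2.1 p.2.2) ^ (-b)) * F p.2 *
      (ENNReal.ofReal (jap (sig j (p.1 + p.2).1 (p.1 + p.2).2) ^ (-a)) * H (p.1 + p.2)))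
        ∂(muX.prod muX) ≤
    (40 * ∑' d : ℕ, ENNReal.ofReal (2 ^ (-(min a b - 1 / (2 * (2 * (j : ℝ) + 1))))) ^ d) *
      (nrm muX g * nrm muX F * nrm muX H) := by
  set ρ := ENNReal.ofReal (2 ^ (-(min a b - 1 / (2 * (2 * (j : ℝ) + 1)))))
  have hmF := measurable_loc j hF
  have hmH := measurable_loc j hH
  calc _ ≤ ∫⁻ p, ∑' i : ℕ, ∑' l : ℕ, ENNReal.ofReal (2 ^ (-(i * b))) *
        ENNReal.ofReal (2 ^ (-(l * a))) *
        (g p.1 * (loc j F i p.2 * loc j H l (p.1 + p.2))) ∂(muX.prod muX) := by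
        refine lintegral_mono fun p => ?_
        refine (mul_le_mul' le_rfl (mul_le_mul' (weight_le hb F p.2)
          (weight_le ha H (p.1 + p.2)))).trans (le_of_eq ?_)
        rw [← ENNReal.tsum_mul_right, ← ENNReal.tsum_mul_left]
        congr with i
        rw [← ENNReal.tsum_mul_left, ← ENNReal.tsum_mul_left]
        congr with l
        ring
    _ = ∑' i : ℕ, ∑' l : ℕ, ENNReal.ofReal (2 ^ (-(i * b))) *
        ENNReal.ofReal (2 ^ (-(l * a))) *
        ∫⁻ p, g p.1 * (loc j F i p.2 * loc j H l (p.1 + p.2)) ∂(muX.prod muX) := by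
        have hm : ∀ i l, Measurable fun p : (ℤ × ℝ) × (ℤ × ℝ) =>
            g p.1 * (loc j F i p.2 * loc j H l (p.1 + p.2)) := fun i l =>
          (hg.comp measurable_fst).mul (((hmF i).comp measurable_snd).mul
            ((hmH l).comp (measurable_fst.add measurable_snd)))
        rw [lintegral_tsum fun i =>
          (Measurable.tsum fun l => (hm i l).const_mul _).aemeasurable]
        congr with i
        rw [lintegral_tsum fun l => ((hm i l).const_mul _).aemeasurable]
        congr with l
        exact lintegral_const_mul _ (hm i l)
    _ ≤ ∑' i : ℕ, ∑' l : ℕ, 20 * nrm muX g * (ρ ^ Nat.dist i l *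
          (nrm muX (loc j F i) * nrm muX (loc j H l))) := by
        refine ENNReal.tsum_le_tsum fun i => ENNReal.tsum_le_tsum fun l => ?_
        refine (tri_level hj hab hg hF hH i l).trans (le_of_eq ?_)
        ring
    _ ≤ 20 * nrm muX g * ((∑' d : ℕ, ρ ^ d) * (2 * (nrm muX F * nrm muX H))) := by
        simp_rw [ENNReal.tsum_mul_left]
        gcongr
        have := sum_offdiag ρ (fun i => nrm muX (loc j F i)) (fun l => nrm muX (loc j H l))
        rwa [nrm_count_nrm_loc j hF, nrm_count_nrm_loc j hH] at this
    _ = _ := by ring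

/-! ### Convolutions -/

lemma lintegral_muX {f : ℤ × ℝ → ℝ≥0∞} (hf : Measurable f) :
    ∫⁻ p, f p ∂muX = ∑' k : ℤ, ∫⁻ τ, f (k, τ) := by
  rw [lintegral_prod _ hf.aemeasurable, lintegral_count]

lemma l2L2_eq_nrm {f : ℤ → ℝ → ℝ≥0∞} (hf : Measurable (Function.uncurry f)) :
    l2L2 f = nrm muX (Function.uncurry f) := by
  rw [nrm, lintegral_muX (hf.pow_const 2), l2L2]
  rfl

lemma measurable_wt (j : ℕ) (b : ℝ) {f : ℤ → ℝ → ℝ≥0∞} (hf : Measurable (Function.uncurry f)) :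
    Measurable (Function.uncurry (wt j b f)) :=
  (((measurable_jap.comp (measurable_sig j)).pow_const b).ennreal_ofReal).mul hf

lemma measurable_conv {f g : ℤ → ℝ → ℝ≥0∞} (hf : Measurable (Function.uncurry f))
    (hg : Measurable (Function.uncurry g)) : Measurable (Function.uncurry (conv f g)) := by
  refine measurable_from_prod_countable_right fun k => ?_
  simp only [Function.uncurry_apply_pair]
  unfold conv
  refine Measurable.tsum fun k₁ => ?_
  by_cases h : k₁ ≠ 0 ∧ k - k₁ ≠ 0
  · simp only [if_pos h]
    have h1 : Measurable (f k₁) := hf.comp measurable_prodMk_left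
    have h2 : Measurable (g (k - k₁)) := hg.comp measurable_prodMk_left
    have h3 : Measurable fun q : ℝ × ℝ => f k₁ q.2 * g (k - k₁) (q.1 - q.2) := by fun_prop
    exact h3.lintegral_prod_right'
  · simp only [if_neg h]
    exact measurable_const

lemma conv_le {f g : ℤ → ℝ → ℝ≥0∞} (hf : Measurable (Function.uncurry f))
    (hg : Measurable (Function.uncurry g)) (z : ℤ × ℝ) :
    conv f g z.1 z.2 ≤ ∫⁻ y, Function.uncurry f y * Function.uncurry g (z - y) ∂muX := by
  have hm : Measurable fun y => Function.uncurry f y * Function.uncurry g (z - y) :=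
    hf.mul (hg.comp (measurable_const.sub measurable_id))
  rw [lintegral_muX hm, conv]
  refine ENNReal.tsum_le_tsum fun k₁ => ?_
  split_ifs
  · exact le_rfl
  · exact zero_le

/-- Pairing a convolution with a test function gives the trilinear form. -/
lemma lintegral_mul_conv {f g v : ℤ × ℝ → ℝ≥0∞} (hf : Measurable f) (hg : Measurable g)
    (hv : Measurable v) :
    ∫⁻ z, v z * ∫⁻ y, f y * g (z - y) ∂muX ∂muX =
      ∫⁻ p, g p.1 * (f p.2 * v (p.1 + p.2)) ∂(muX.prod muX) := by
  have hm : Measurable fun q : (ℤ × ℝ) × (ℤ × ℝ) => v q.1 * (f q.2 * g (q.1 - q.2)) :=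
    (hv.comp measurable_fst).mul ((hf.comp measurable_snd).mul
      (hg.comp (measurable_fst.sub measurable_snd)))
  have hm' : Measurable fun p : (ℤ × ℝ) × (ℤ × ℝ) => g p.1 * (f p.2 * v (p.1 + p.2)) :=
    (hg.comp measurable_fst).mul ((hf.comp measurable_snd).mul
      (hv.comp (measurable_fst.add measurable_snd)))
  calc _ = ∫⁻ z, ∫⁻ y, v z * (f y * g (z - y)) ∂muX ∂muX := by
        congr with z
        rw [lintegral_const_mul]
        exact hf.mul (hg.comp (measurable_const.sub measurable_id))
    _ = ∫⁻ y, ∫⁻ z, v z * (f y * g (z - y)) ∂muX ∂muX :=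
        lintegral_lintegral_swap hm.aemeasurable
    _ = ∫⁻ y, ∫⁻ x, g x * (f y * v (x + y)) ∂muX ∂muX := by
        congr with y
        rw [← lintegral_add_right_eq_self _ y]
        congr with x
        rw [add_sub_cancel_right]
        ring
    _ = _ := (lintegral_prod_symm _ hm'.aemeasurable).symm

/-- **Lemma 2.2, estimate (2.03):** `‖uv‖_{X_{0,−a}} ≤ C‖u‖_{X_{0,b}}‖v‖_{L²}`
on the Fourier side. -/
theorem stmt_5 (j : ℕ) (hj : 1 ≤ j) (a b : ℝ)
    (hab : ((j : ℝ) + 1) / (2 * (j : ℝ) + 1) ≤ a + b)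
    (hmin : 1 / (2 * (2 * (j : ℝ) + 1)) < min a b) :
    ∃ C : ℝ, 0 < C ∧ ∀ f g : ℤ → ℝ → ℝ≥0∞,
      Measurable (Function.uncurry f) → Measurable (Function.uncurry g) →
      (∀ τ, f 0 τ = 0) → (∀ τ, g 0 τ = 0) →
      l2L2 (wt j (-a) (conv f g)) ≤ ENNReal.ofReal C * l2L2 (wt j b f) * l2L2 g := by
  set c : ℝ := 1 / (2 * (2 * (j : ℝ) + 1)) with hc
  have hc0 : 0 ≤ c := by positivity
  have ha : 0 ≤ a := by linarith [min_le_left a b]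
  have hb : 0 ≤ b := by linarith [min_le_right a b]
  set ρ : ℝ≥0∞ := ENNReal.ofReal (2 ^ (-(min a b - c))) with hρ
  have hρ1 : ρ < 1 := by
    rw [hρ, ENNReal.ofReal_lt_one]
    exact Real.rpow_lt_one_of_one_lt_of_neg (by norm_num) (by linarith)
  set K : ℝ≥0∞ := 40 * ∑' d : ℕ, ρ ^ d with hK
  have hKtop : K ≠ ∞ := by
    rw [hK, ENNReal.tsum_geometric]
    refine ENNReal.mul_ne_top (by simp) (ENNReal.inv_ne_top.2 ?_)
    exact (tsub_pos_of_lt hρ1).ne'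
  refine ⟨K.toReal + 1, by positivity, fun f g hf hg _ _ => ?_⟩
  have hKC : K ≤ ENNReal.ofReal (K.toReal + 1) := by
    refine (ENNReal.ofReal_toReal hKtop).symm.le.trans (ENNReal.ofReal_le_ofReal ?_)
    linarith
  rw [l2L2_eq_nrm (measurable_wt j _ (measurable_conv hf hg)),
    l2L2_eq_nrm (measurable_wt j b hf), l2L2_eq_nrm hg]
  refine nrm_le_of_dual muX (measurable_wt j _ (measurable_conv hf hg)) _ fun v hv => ?_
  set V : ℤ × ℝ → ℝ≥0∞ := fun z => ENNReal.ofReal (jap (sig j z.1 z.2) ^ (-a)) * v z with hV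
  have hVm : Measurable V :=
    (((measurable_jap.comp (measurable_sig j)).pow_const (-a)).ennreal_ofReal).mul hv
  -- `f` is recovered from the weighted function, as the bracket never vanishes
  have hfw : ∀ y, Function.uncurry f y = ENNReal.ofReal (jap (sig j y.1 y.2) ^ (-b)) *
      Function.uncurry (wt j b f) y := by
    rintro ⟨k, τ⟩
    have h0 : 0 < jap (sig j k τ) := by linarith [one_le_jap (sig j k τ)]
    simp only [Function.uncurry_apply_pair, wt]
    rw [← mul_assoc, ← ENNReal.ofReal_mul (by positivity), ← Real.rpow_add h0]
    simp
  calc ∫⁻ z, v z * Function.uncurry (wt j (-a) (conv f g)) z ∂muX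
      ≤ ∫⁻ z, V z * ∫⁻ y, Function.uncurry f y * Function.uncurry g (z - y) ∂muX ∂muX := by
        refine lintegral_mono fun z => ?_
        calc _ = V z * conv f g z.1 z.2 := by
              simp only [hV, Function.uncurry, wt]; ring
          _ ≤ _ := by gcongr; exact conv_le hf hg z
    _ = ∫⁻ p, Function.uncurry g p.1 * (Function.uncurry f p.2 * V (p.1 + p.2))
          ∂(muX.prod muX) := lintegral_mul_conv hf hg hVm
    _ ≤ K * (nrm muX (Function.uncurry g) * nrm muX (Function.uncurry (wt j b f)) *
          nrm muX v) := by
        simp_rw [hfw]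
        exact tri_main hj ha hb hab hg (measurable_wt j b hf) hv
    _ ≤ ENNReal.ofReal (K.toReal + 1) * (nrm muX (Function.uncurry g) *
          nrm muX (Function.uncurry (wt j b f)) * nrm muX v) := by gcongr
    _ = _ := by ring

end
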